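/- Fix a load vector x = (x_1,…,x_Q) with x_j > 0 for all j, and suppose X* ∈ F(x) is a global minimizer of the total system cost 𝒞 over the feasible set F(x). Then X* is a Wardrop equilibrium: for every j ∈ {1,…,Q}, every r with x*_j^r > 0, and every i ∈ {1,…,Q}, F_j^r(X*) ≤ F_j^i(X*). Equivalently, for every j there exists λ_j ∈ ℝ such that F_j^i(X*) = λ_j whenever x*_j^i > 0 and F_j^i(X*) ≥ λ_j whenever x*_j^i = 0. -/

import Mathlib

open Finset Set

/-- The feasible domain Ω: all entries nonnegative and each column sum below capacity. -/
def feasible {Q : ℕ} (C : Fin Q → ℝ) : Set (Fin Q → Fin Q → ℝ) :=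
  {X | (∀ j i, 0 ≤ X j i) ∧ ∀ i, (∑ l, X l i) < C i}

/-- The total system cost 𝒞(X). -/
noncomputable def cost {Q : ℕ} (C : Fin Q → ℝ) (p : Fin Q → Fin Q → ℝ)
    (X : Fin Q → Fin Q → ℝ) : ℝ :=
  ∑ i, ((∑ r, X r i) / (C i - ∑ l, X l i) + ∑ r, p r i * X r i)

/-- The payoff F_j^i(X) of option i to mTracker j. -/
noncomputable def payoff {Q : ℕ} (C : Fin Q → ℝ) (p : Fin Q → Fin Q → ℝ)
    (X : Fin Q → Fin Q → ℝ) (j i : Fin Q) : ℝ :=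
  1 / (C i - ∑ l, X l i) + p j i + (∑ l, X l i) / (C i - ∑ l, X l i) ^ 2

/-- The feasible set F(x) of states in Ω whose row sums match the load vector x. -/
def feasLoad {Q : ℕ} (C : Fin Q → ℝ) (x : Fin Q → ℝ) : Set (Fin Q → Fin Q → ℝ) :=
  {X | X ∈ feasible C ∧ ∀ j, (∑ i, X j i) = x j}

/-!
At a feasible state the payoffs are the partial derivatives of the cost: writing `y` for the load
of option `i`, the derivative of `y / (C i - y)` is `1 / (C i - y) + y / (C i - y) ^ 2`. If mTracker
`j` uses option `r`, then diverting a little of its demand from `r` to any other option `i` keeps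
the state feasible, so at a minimizer the directional derivative `F_j^i - F_j^r` of the cost in that
direction is nonnegative.
-/

open scoped Topology

section Wardrop

variable {J I : Type*}

/-- Wardrop equilibrium of flows `X` under payoffs `F`, both indexed by agent and then option.
Payoffs are costs, so agents prefer smaller ones. -/
def IsWardrop (F X : J → I → ℝ) : Prop :=
  ∀ j r i, 0 < X j r → F j r ≤ F j i

lemma IsWardrop.exists_eq_and_forall_le [Finite I] [Nonempty I] {F X : J → I → ℝ}
    (h : IsWardrop F X) (j : J) :
    ∃ lam, (∀ i, 0 < X j i → F j i = lam) ∧ ∀ i, lam ≤ F j i := by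
  obtain ⟨i₀, hi₀⟩ := Finite.exists_min (F j)
  exact ⟨F j i₀, fun i hi => (h j i i₀ hi).antisymm (hi₀ i), hi₀⟩

/-- The coordinate functional `X ↦ X j i`. -/
def entry (j : J) (i : I) : (J → I → ℝ) →L[ℝ] ℝ :=
  (ContinuousLinearMap.proj (φ := fun _ => ℝ) i).comp
    (ContinuousLinearMap.proj (φ := fun _ => I → ℝ) j)

section Pairing

variable [Fintype J] [Fintype I]

/-- The linear functional `V ↦ ∑ j, ∑ i, F j i * V j i`; a cost function has the payoffs `F` as its
partial derivatives when its Fréchet derivative is `pairing F`. -/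
noncomputable def pairing (F : J → I → ℝ) : (J → I → ℝ) →L[ℝ] ℝ :=
  ∑ j, ∑ i, F j i • entry j i

lemma pairing_apply (F V : J → I → ℝ) : pairing F V = ∑ j, ∑ i, F j i * V j i := by
  simp [pairing, entry]

end Pairing

variable [DecidableEq J] [DecidableEq I]

/-- The direction in which agent `j` diverts flow from option `r` to option `i` at unit rate. -/
def transfer (j : J) (r i : I) : J → I → ℝ :=
  Pi.single j (Pi.single i 1 - Pi.single r 1)

lemma sum_transfer [Fintype I] (j : J) (r i : I) (l : J) : ∑ k, transfer j r i l k = 0 := by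
  rcases eq_or_ne l j with rfl | hl
  · simp [transfer]
  · simp [transfer, hl]

lemma eq_and_eq_of_transfer_neg {j l : J} {r i k : I} (h : transfer j r i l k < 0) :
    l = j ∧ k = r := by
  by_contra hne
  refine h.not_ge ?_
  rcases eq_or_ne l j with rfl | hl
  · have hk : k ≠ r := fun hk => hne ⟨rfl, hk⟩
    have hi : (0 : I → ℝ) ≤ Pi.single i 1 := Pi.single_nonneg.2 zero_le_one
    simpa [transfer, hk] using hi k
  · simp [transfer, hl]

variable [Fintype J] [Fintype I]

lemma pairing_transfer (F : J → I → ℝ) (j : J) (r i : I) :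
    pairing F (transfer j r i) = F j i - F j r := by
  rw [pairing_apply, Fintype.sum_eq_single j fun l hl => by simp [transfer, hl]]
  simp [transfer, mul_sub, Pi.single_apply]

lemma isWardrop_of_isLocalMinOn {Φ : (J → I → ℝ) → ℝ} {F X : J → I → ℝ} {S : Set (J → I → ℝ)}
    (hmin : IsLocalMinOn Φ S X) (hΦ : HasFDerivWithinAt Φ (pairing F) S X)
    (htransfer : ∀ j r i, 0 < X j r → transfer j r i ∈ posTangentConeAt S X) :
    IsWardrop F X := by
  intro j r i hr
  have hnonneg : 0 ≤ pairing F (transfer j r i) :=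
    hmin.hasFDerivWithinAt_nonneg hΦ (htransfer j r i hr)
  simpa only [pairing_transfer, sub_nonneg] using hnonneg

end Wardrop

lemma hasDerivAt_div_const_sub {c y : ℝ} (h : y ≠ c) :
    HasDerivAt (fun z => z / (c - z)) (1 / (c - y) + y / (c - y) ^ 2) y := by
  have hne : c - y ≠ 0 := sub_ne_zero.2 h.symm
  refine ((hasDerivAt_id' y).fun_div ((hasDerivAt_id' y).const_sub c) hne).congr_deriv ?_
  field_simp
  ring

lemma eventually_lt_add_mul {a b c : ℝ} (h : a < c) : ∀ᶠ t in 𝓝 0, a + t * b < c := by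
  have hcont : ContinuousAt (fun t : ℝ => a + t * b) 0 := by fun_prop
  exact hcont.eventually_lt_const (by simpa using h)

lemma eventually_nonneg_add_mul {a b : ℝ} (ha : 0 ≤ a) (hab : b < 0 → 0 < a) :
    ∀ᶠ t in 𝓝[>] 0, 0 ≤ a + t * b := by
  rcases lt_or_ge b 0 with hb | hb
  · have hcont : ContinuousAt (fun t : ℝ => a + t * b) 0 := by fun_prop
    have hpos : ∀ᶠ t in 𝓝 0, 0 < a + t * b :=
      hcont.eventually_const_lt (by simpa using hab hb)
    exact (hpos.filter_mono nhdsWithin_le_nhds).mono fun _ => le_of_lt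
  · filter_upwards [self_mem_nhdsWithin] with t ht
    exact add_nonneg ha (mul_nonneg (le_of_lt ht) hb)

section MTracker

variable {Q : ℕ} {C x : Fin Q → ℝ} {p X : Fin Q → Fin Q → ℝ}

lemma hasFDerivAt_cost (hX : ∀ i, ∑ l, X l i ≠ C i) :
    HasFDerivAt (cost C p) (pairing (payoff C p X)) X := by
  have hentry (j i : Fin Q) : HasFDerivAt (fun Y => Y j i) (entry j i) X :=
    (entry j i).hasFDerivAt
  have hload (i : Fin Q) := HasFDerivAt.fun_sum (u := univ) fun l _ => hentry l i
  have hdelay (i : Fin Q) := (hasDerivAt_div_const_sub (hX i)).comp_hasFDerivAt X (hload i)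
  have htransit (i : Fin Q) :=
    HasFDerivAt.fun_sum (u := univ) fun r _ => (hentry r i).const_mul (p r i)
  refine (HasFDerivAt.fun_sum (u := univ) fun i _ =>
    (hdelay i).add (htransit i)).congr_fderiv ?_
  rw [pairing, sum_comm]
  refine sum_congr rfl fun i _ => ?_
  simp only [payoff, smul_sum, ← sum_add_distrib, ← add_smul]
  refine sum_congr rfl fun l _ => ?_
  congr 1
  ring

lemma mem_posTangentConeAt_feasLoad {V : Fin Q → Fin Q → ℝ} (hX : X ∈ feasLoad C x)
    (hsum : ∀ j, ∑ i, V j i = 0) (hneg : ∀ j i, V j i < 0 → 0 < X j i) :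
    V ∈ posTangentConeAt (feasLoad C x) X := by
  have hnonneg : ∀ᶠ t in 𝓝[>] (0 : ℝ), ∀ j i, 0 ≤ X j i + t * V j i :=
    Filter.eventually_all.2 fun j => Filter.eventually_all.2 fun i =>
      eventually_nonneg_add_mul (hX.1.1 j i) (hneg j i)
  have hcapacity : ∀ᶠ t in 𝓝[>] (0 : ℝ), ∀ i, (∑ l, X l i) + t * ∑ l, V l i < C i :=
    Filter.eventually_all.2 fun i =>
      (eventually_lt_add_mul (hX.1.2 i)).filter_mono nhdsWithin_le_nhds
  refine mem_posTangentConeAt_of_frequently_mem (Filter.Eventually.frequently ?_)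
  filter_upwards [hnonneg, hcapacity] with t ht_nonneg ht_capacity
  refine ⟨⟨ht_nonneg, fun i => ?_⟩, fun j => ?_⟩
  · simpa [sum_add_distrib, ← mul_sum] using ht_capacity i
  · simp [sum_add_distrib, ← mul_sum, hsum, hX.2]

lemma transfer_mem_posTangentConeAt_feasLoad (hX : X ∈ feasLoad C x) {j r : Fin Q}
    (hr : 0 < X j r) (i : Fin Q) : transfer j r i ∈ posTangentConeAt (feasLoad C x) X := by
  refine mem_posTangentConeAt_feasLoad hX (sum_transfer j r i) fun l k hneg => ?_
  obtain ⟨rfl, rfl⟩ := eq_and_eq_of_transfer_neg hneg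
  exact hr

theorem minimizer_is_wardrop_general (hX : X ∈ feasLoad C x)
    (hmin : IsLocalMinOn (cost C p) (feasLoad C x) X) :
    (∀ j r i, 0 < X j r → payoff C p X j r ≤ payoff C p X j i) ∧
    (∀ j, ∃ lam : ℝ, (∀ i, 0 < X j i → payoff C p X j i = lam) ∧
      (∀ i, X j i = 0 → lam ≤ payoff C p X j i)) := by
  have hderiv : HasFDerivAt (cost C p) (pairing (payoff C p X)) X :=
    hasFDerivAt_cost fun i => (hX.1.2 i).ne
  have hwardrop : IsWardrop (payoff C p X) X :=
    isWardrop_of_isLocalMinOn hmin hderiv.hasFDerivWithinAt fun _ _ i hr =>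
      transfer_mem_posTangentConeAt_feasLoad hX hr i
  refine ⟨hwardrop, fun j => ?_⟩
  have : Nonempty (Fin Q) := ⟨j⟩
  obtain ⟨lam, heq, hle⟩ := hwardrop.exists_eq_and_forall_le j
  exact ⟨lam, heq, fun i _ => hle i⟩

end MTracker

/-- A global minimizer of the total system cost over the feasible set F(x) is a
Wardrop equilibrium. -/
theorem minimizer_is_wardrop (Q : ℕ) (hQ : 1 ≤ Q)
    (C : Fin Q → ℝ) (hC : ∀ i, 0 < C i)
    (p : Fin Q → Fin Q → ℝ) (hp : ∀ j i, 0 ≤ p j i)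
    (x : Fin Q → ℝ) (hx : ∀ j, 0 < x j)
    (Xs : Fin Q → Fin Q → ℝ) (hXs : Xs ∈ feasLoad C x)
    (hmin : ∀ Y ∈ feasLoad C x, cost C p Xs ≤ cost C p Y) :
    (∀ j r i, 0 < Xs j r → payoff C p Xs j r ≤ payoff C p Xs j i) ∧
    (∀ j, ∃ lam : ℝ, (∀ i, 0 < Xs j i → payoff C p Xs j i = lam) ∧
      (∀ i, Xs j i = 0 → lam ≤ payoff C p Xs j i)) :=
  minimizer_is_wardrop_general hXs (isMinOn_iff.2 hmin).localize
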